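/- arXiv:1605.03266 — 2 statements merged into one kernel-verified Lean document; each statement's English description precedes it below -/
import Mathlib

section
/- Let n be a natural number and let s be the outmap of a unique sink orientation (USO) of the n-dimensional hypercube. If u and v are vertices with s(u) = s(v), then u = v (injectivity of the outmap). -/
/-- An outmap `s` is the outmap of an orientation of the `n`-cube if for every
vertex `v` and every direction `lam`, the `lam`-edge at `v` is outgoing at `v`
iff it is incoming at the neighbor `v Δ {lam}`. -/
def IsOrientation (n : ℕ) (s : Finset (Fin n) → Finset (Fin n)) : Prop :=
  ∀ (v : Finset (Fin n)) (lam : Fin n), lam ∈ s v ↔ lam ∉ s (symmDiff v {lam})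

/-- An outmap `s` is a unique sink orientation (USO) of the `n`-cube if it is
the outmap of an orientation and every subcube `[u : w]` has a unique sink. -/
def IsUSO (n : ℕ) (s : Finset (Fin n) → Finset (Fin n)) : Prop :=
  IsOrientation n s ∧
    ∀ u w : Finset (Fin n), u ⊆ w →
      ∃! x : Finset (Fin n), u ⊆ x ∧ x ⊆ w ∧ s x ∩ (w \ u) = ∅

/-!
On every face `[u, w]` of the cube the outmap takes each value `T ⊆ w \ u` exactly once, by
induction on `T`. For `T = ∅` this says that sinks are unique. To add a direction `l` to `T`, ignore
`l` and look for vertices of `[u, w]` whose remaining outgoing directions are `T`: by induction each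
of the two facets orthogonal to `l` contains exactly one, and exactly one of these two has its
`l`-edge incoming. The other one is then the only vertex with outgoing directions `insert l T`.
Two vertices `u` and `v` are compared on the face `[u ∩ v, u ∪ v]` that they span.
-/

theorem existsUnique_and_of_existsUnique_and_not {β : Type*} {p q r : β → Prop}
    (hq : ∃! x, p x ∧ q x) (hnq : ∃! x, p x ∧ ¬q x) (hnr : ∃! x, p x ∧ ¬r x) :
    ∃! x, p x ∧ r x := by
  obtain ⟨x, ⟨hpx, hqx⟩, hx⟩ := hq
  obtain ⟨y, ⟨hpy, hqy⟩, hy⟩ := hnq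
  have eq_or_eq (z : β) (hz : p z) : z = x ∨ z = y := by
    by_cases hqz : q z
    · exact .inl (hx z ⟨hz, hqz⟩)
    · exact .inr (hy z ⟨hz, hqz⟩)
  have ne : x ≠ y := fun h => hqy (h ▸ hqx)
  obtain ⟨z, ⟨hpz, hrz⟩, hz⟩ := hnr
  rcases eq_or_eq z hpz with rfl | rfl
  · have hry : r y := by_contra fun h => ne (hz y ⟨hpy, h⟩).symm
    exact ⟨y, ⟨hpy, hry⟩, fun t ht => (eq_or_eq t ht.1).resolve_left fun h => hrz (h ▸ ht.2)⟩
  · have hrx : r x := by_contra fun h => ne (hz x ⟨hpx, h⟩)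
    exact ⟨x, ⟨hpx, hrx⟩, fun t ht => (eq_or_eq t ht.1).resolve_right fun h => hrz (h ▸ ht.2)⟩

section Outmap

variable {α : Type*} [DecidableEq α]

theorem inter_eq_iff_inter_erase_eq_and_notMem {A D T : Finset α} {l : α} (hD : l ∈ D)
    (hT : l ∉ T) : A ∩ D = T ↔ A ∩ D.erase l = T ∧ l ∉ A := by
  grind

theorem inter_eq_insert_iff_inter_erase_eq_and_mem {A D T : Finset α} {l : α} (hD : l ∈ D)
    (hT : l ∉ T) : A ∩ D = insert l T ↔ A ∩ D.erase l = T ∧ l ∈ A := by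
  simp only [Finset.ext_iff, Finset.mem_inter, Finset.mem_erase, Finset.mem_insert]
  grind

/-- The outmap `s` on the finite subsets of `α` has a unique sink in every face `[u, w]`. The
directions of that face are the elements of `w \ u`. For `α = Fin n` this is the second half of
`IsUSO`. -/
def HasUniqueSinks (s : Finset α → Finset α) : Prop :=
  ∀ u w : Finset α, u ⊆ w → ∃! x : Finset α, u ⊆ x ∧ x ⊆ w ∧ s x ∩ (w \ u) = ∅

variable {s : Finset α → Finset α}

theorem HasUniqueSinks.existsUnique_inter_sdiff_eq (hs : HasUniqueSinks s) {u w T : Finset α}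
    (huw : u ⊆ w) (hT : T ⊆ w \ u) :
    ∃! x : Finset α, u ⊆ x ∧ x ⊆ w ∧ s x ∩ (w \ u) = T := by
  induction T using Finset.induction_on generalizing u w with
  | empty => exact hs u w huw
  | insert l T hlT ih =>
    obtain ⟨hl, hTuw⟩ := Finset.insert_subset_iff.mp hT
    obtain ⟨hlw, hlu⟩ := Finset.mem_sdiff.mp hl
    have hTerase : T ⊆ (w \ u).erase l := Finset.subset_erase.mpr ⟨hTuw, hlT⟩
    have upper_facet :
        ∃! x, (u ⊆ x ∧ x ⊆ w ∧ s x ∩ (w \ u).erase l = T) ∧ l ∈ x := by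
      simpa only [Finset.insert_subset_iff, Finset.sdiff_insert, and_assoc, and_comm, and_left_comm]
        using ih (Finset.insert_subset hlw huw) (by rwa [Finset.sdiff_insert])
    have lower_facet :
        ∃! x, (u ⊆ x ∧ x ⊆ w ∧ s x ∩ (w \ u).erase l = T) ∧ l ∉ x := by
      simpa only [Finset.subset_erase, Finset.erase_sdiff_comm, and_assoc, and_comm, and_left_comm]
        using ih (Finset.subset_erase.mpr ⟨huw, hlu⟩) (by rwa [Finset.erase_sdiff_comm])
    have incoming :
        ∃! x, (u ⊆ x ∧ x ⊆ w ∧ s x ∩ (w \ u).erase l = T) ∧ l ∉ s x := by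
      simpa only [inter_eq_iff_inter_erase_eq_and_notMem hl hlT, and_assoc] using ih huw hTuw
    simpa only [inter_eq_insert_iff_inter_erase_eq_and_mem hl hlT, and_assoc] using
      existsUnique_and_of_existsUnique_and_not upper_facet lower_facet incoming

theorem uso_outmap_injective_general (hs : HasUniqueSinks s) {u v : Finset α}
    (huv : s u ∩ symmDiff u v = s v ∩ symmDiff u v) : u = v := by
  have directions : symmDiff u v = (u ∪ v) \ (u ∩ v) := symmDiff_eq_sup_sdiff_inf u v
  rw [directions] at huv
  exact (hs.existsUnique_inter_sdiff_eq Finset.inter_subset_union Finset.inter_subset_right).unique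
    ⟨Finset.inter_subset_left, Finset.subset_union_left, huv⟩
    ⟨Finset.inter_subset_right, Finset.subset_union_right, rfl⟩

end Outmap

/-- The outmap of a USO of a cube is injective. -/
theorem uso_outmap_injective (n : ℕ)
    (s : Finset (Fin n) → Finset (Fin n)) (hs : IsUSO n s)
    (u v : Finset (Fin n)) (huv : s u = s v) :
    u = v := by
  exact uso_outmap_injective_general hs.2 (by rw [huv])
end

section
/- For every n ≥ 1, the recursively defined outmap s_n is the outmap of a unique sink orientation (USO) of the n-dimensional hypercube. -/
/-- The recursion step from dimension n to dimension n+1: on the lower facet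
(vertices not containing Fin.last n) use the outmap s together with the
outgoing new direction Fin.last n; on the upper facet (vertices containing
Fin.last n) all edges point downward, so the outmap is v \ {Fin.last n}. -/
noncomputable def stepOutmap (n : ℕ) (s : Finset (Fin n) → Finset (Fin n)) :
    Finset (Fin (n + 1)) → Finset (Fin (n + 1)) := fun v =>
  if Fin.last n ∈ v then v \ {Fin.last n}
  else
    (s (v.preimage Fin.castSucc (Fin.castSucc_injective n).injOn)).image Fin.castSucc ∪
      {Fin.last n}

/-- The recursively defined family of outmaps s_n: for n = 1 the single edge
points from ∅ to {0}; s_{n+1} is obtained from s_n by the recursion step.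
(The value at n = 0 is irrelevant.) -/
noncomputable def recOutmap : (n : ℕ) → Finset (Fin n) → Finset (Fin n)
  | 0 => fun _ => ∅
  | 1 => fun v => if (0 : Fin 1) ∈ v then ∅ else {0}
  | (n + 2) => stepOutmap (n + 1) (recOutmap (n + 1))

/-!
The upper facet of the recursion step carries the outmap `v ↦ v`, which is a USO because the unique
sink of a subcube `[u : w]` is `u`. So the step glues two USOs along a direction in which every
edge points up, and such a gluing is a USO: a sink of `[u : w]` must lie as high as possible in the
last direction, hence is the sink of a subcube of one fixed facet.
-/

theorem isUSO_zero (s : Finset (Fin 0) → Finset (Fin 0)) : IsUSO 0 s :=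
  ⟨fun _ lam => lam.elim0, fun u _ huw =>
    ⟨u, ⟨subset_rfl, huw, Subsingleton.elim _ _⟩, fun _ _ => Subsingleton.elim _ _⟩⟩

theorem isUSO_id (n : ℕ) : IsUSO n id := by
  refine ⟨fun v lam => by simp [Finset.mem_symmDiff], fun u w huw => ⟨u, ?_, ?_⟩⟩
  · exact ⟨subset_rfl, huw, Finset.inter_sdiff_self u w⟩
  · rintro x ⟨hux, hxw, hsink⟩
    have hxu : x \ u = ∅ := by
      rwa [id, ← Finset.inter_sdiff_assoc, Finset.inter_eq_left.mpr hxw] at hsink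
    exact (Finset.sdiff_eq_empty_iff_subset.mp hxu).antisymm hux

section Facets

variable {n : ℕ}

/-- The projection of the `(n + 1)`-cube onto the `n`-cube that forgets the last coordinate. -/
noncomputable def dropLast (v : Finset (Fin (n + 1))) : Finset (Fin n) :=
  v.preimage Fin.castSucc (Fin.castSucc_injective n).injOn

theorem mem_dropLast {v : Finset (Fin (n + 1))} {i : Fin n} :
    i ∈ dropLast v ↔ i.castSucc ∈ v :=
  Finset.mem_preimage

theorem dropLast_symmDiff_castSucc (v : Finset (Fin (n + 1))) (i : Fin n) :
    dropLast (symmDiff v {i.castSucc}) = symmDiff (dropLast v) {i} := by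
  ext j
  simp [mem_dropLast, Finset.mem_symmDiff]

theorem subset_iff_last_and_dropLast {u w : Finset (Fin (n + 1))} :
    u ⊆ w ↔ (Fin.last n ∈ u → Fin.last n ∈ w) ∧ dropLast u ⊆ dropLast w := by
  simp only [Finset.subset_iff, Fin.forall_fin_succ', mem_dropLast, and_comm]

theorem inter_sdiff_eq_empty_iff_last_and_dropLast {a u w : Finset (Fin (n + 1))} :
    a ∩ (w \ u) = ∅ ↔ (Fin.last n ∈ a → Fin.last n ∈ w → Fin.last n ∈ u) ∧
      dropLast a ∩ (dropLast w \ dropLast u) = ∅ := by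
  simp only [← Finset.disjoint_iff_inter_eq_empty, Finset.disjoint_left, Finset.mem_sdiff,
    Fin.forall_fin_succ', mem_dropLast, not_and_not_right]
  exact and_comm

theorem eq_of_last_mem_iff_of_dropLast_eq {x y : Finset (Fin (n + 1))}
    (hlast : Fin.last n ∈ x ↔ Fin.last n ∈ y) (hdrop : dropLast x = dropLast y) : x = y :=
  (subset_iff_last_and_dropLast.mpr ⟨hlast.mp, hdrop.subset⟩).antisymm
    (subset_iff_last_and_dropLast.mpr ⟨hlast.mpr, hdrop.symm.subset⟩)

theorem exists_last_mem_iff_and_dropLast_eq (p : Prop) (y : Finset (Fin n)) :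
    ∃ x : Finset (Fin (n + 1)), (Fin.last n ∈ x ↔ p) ∧ dropLast x = y := by
  by_cases hp : p
  · refine ⟨insert (Fin.last n) (y.image Fin.castSucc), by simp [hp], ?_⟩
    ext i
    simp [mem_dropLast, Fin.castSucc_ne_last]
  · refine ⟨y.image Fin.castSucc, by simp [hp, Fin.castSucc_ne_last], ?_⟩
    ext i
    simp [mem_dropLast]

theorem existsUnique_last_mem_iff_and_dropLast (p : Prop) {P : Finset (Fin n) → Prop}
    (h : ∃! y, P y) :
    ∃! x : Finset (Fin (n + 1)), (Fin.last n ∈ x ↔ p) ∧ P (dropLast x) := by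
  obtain ⟨y, hy, hunique⟩ := h
  obtain ⟨x, hlast, rfl⟩ := exists_last_mem_iff_and_dropLast_eq p y
  exact ⟨x, ⟨hlast, hy⟩, fun z ⟨hzlast, hz⟩ =>
    eq_of_last_mem_iff_of_dropLast_eq (hzlast.trans hlast.symm) (hunique _ hz)⟩

end Facets

/-- The vertex `x` is a sink of the subcube `[u : w]`, as in the definition of `IsUSO`. -/
def IsSubcubeSink {n : ℕ} (s : Finset (Fin n) → Finset (Fin n)) (u w x : Finset (Fin n)) : Prop :=
  u ⊆ x ∧ x ⊆ w ∧ s x ∩ (w \ u) = ∅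

section Combed

variable {n : ℕ} {s t : Finset (Fin n) → Finset (Fin n)}

/-- The outmap of the `(n + 1)`-cube with outmap `s` on the lower facet, outmap `t` on the upper
facet, and every edge between the two facets pointing up. -/
noncomputable def combedOutmap (s t : Finset (Fin n) → Finset (Fin n)) :
    Finset (Fin (n + 1)) → Finset (Fin (n + 1)) := fun v =>
  if Fin.last n ∈ v then (t (dropLast v)).image Fin.castSucc
  else (s (dropLast v)).image Fin.castSucc ∪ {Fin.last n}

theorem last_mem_combedOutmap {v : Finset (Fin (n + 1))} :
    Fin.last n ∈ combedOutmap s t v ↔ Fin.last n ∉ v := by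
  by_cases hv : Fin.last n ∈ v <;> simp [combedOutmap, hv, Fin.castSucc_ne_last]

theorem dropLast_combedOutmap (v : Finset (Fin (n + 1))) :
    dropLast (combedOutmap s t v) = (if Fin.last n ∈ v then t else s) (dropLast v) := by
  ext i
  by_cases hv : Fin.last n ∈ v <;> simp [combedOutmap, mem_dropLast, hv, Fin.castSucc_ne_last]

theorem IsOrientation.combedOutmap (hs : IsOrientation n s) (ht : IsOrientation n t) :
    IsOrientation (n + 1) (combedOutmap s t) := by
  intro v lam
  induction lam using Fin.lastCases with
  | last => simp [last_mem_combedOutmap, Finset.mem_symmDiff]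
  | cast i =>
    have hlast : Fin.last n ∈ symmDiff v {i.castSucc} ↔ Fin.last n ∈ v := by
      simp [Finset.mem_symmDiff, (Fin.castSucc_ne_last i).symm]
    simp only [← mem_dropLast, dropLast_combedOutmap, dropLast_symmDiff_castSucc, hlast]
    split_ifs
    · exact ht _ i
    · exact hs _ i

theorem isSubcubeSink_combedOutmap_iff {u w x : Finset (Fin (n + 1))} (huw : u ⊆ w) :
    IsSubcubeSink (combedOutmap s t) u w x ↔
      (Fin.last n ∈ x ↔ Fin.last n ∈ w) ∧
        IsSubcubeSink (if Fin.last n ∈ w then t else s) (dropLast u) (dropLast w) (dropLast x) := by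
  have hlast_w : Fin.last n ∈ u → Fin.last n ∈ w := @huw (Fin.last n)
  have hlast_x : (Fin.last n ∈ u → Fin.last n ∈ x) ∧ (Fin.last n ∈ x → Fin.last n ∈ w) ∧
      (Fin.last n ∉ x → Fin.last n ∈ w → Fin.last n ∈ u) ↔
        (Fin.last n ∈ x ↔ Fin.last n ∈ w) := by tauto
  calc
    IsSubcubeSink (combedOutmap s t) u w x ↔
        (Fin.last n ∈ x ↔ Fin.last n ∈ w) ∧
          IsSubcubeSink (if Fin.last n ∈ x then t else s)
            (dropLast u) (dropLast w) (dropLast x) := by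
      rw [IsSubcubeSink, IsSubcubeSink, subset_iff_last_and_dropLast,
        subset_iff_last_and_dropLast, inter_sdiff_eq_empty_iff_last_and_dropLast,
        last_mem_combedOutmap, dropLast_combedOutmap, ← hlast_x]
      simp only [and_assoc, and_left_comm]
    _ ↔ _ := and_congr_right fun hxw => by simp only [hxw]

theorem IsUSO.combedOutmap (hs : IsUSO n s) (ht : IsUSO n t) :
    IsUSO (n + 1) (combedOutmap s t) := by
  refine ⟨hs.1.combedOutmap ht.1, fun u w huw => ?_⟩
  have hfacet : IsUSO n (if Fin.last n ∈ w then t else s) := by split_ifs <;> assumption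
  have hdrop : dropLast u ⊆ dropLast w := (subset_iff_last_and_dropLast.mp huw).2
  exact (existsUnique_congr fun _ => isSubcubeSink_combedOutmap_iff huw).mpr
    (existsUnique_last_mem_iff_and_dropLast _ (hfacet.2 _ _ hdrop))

end Combed

theorem stepOutmap_eq_combedOutmap (n : ℕ) (s : Finset (Fin n) → Finset (Fin n)) :
    stepOutmap n s = combedOutmap s id := by
  funext v
  have hupper : v \ {Fin.last n} = (dropLast v).image Fin.castSucc := by
    ext i
    induction i using Fin.lastCases <;> simp [mem_dropLast, Fin.castSucc_ne_last]
  rw [stepOutmap, hupper]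
  rfl

theorem IsUSO.stepOutmap {n : ℕ} {s : Finset (Fin n) → Finset (Fin n)} (hs : IsUSO n s) :
    IsUSO (n + 1) (stepOutmap n s) :=
  stepOutmap_eq_combedOutmap n s ▸ hs.combedOutmap (isUSO_id n)

theorem recOutmap_succ (n : ℕ) : recOutmap (n + 1) = stepOutmap n (recOutmap n) := by
  cases n with
  | zero =>
    funext v
    have hupper : v \ {0} = ∅ := Finset.sdiff_eq_empty_iff_subset.mpr fun i _ =>
      Finset.mem_singleton.mpr (Subsingleton.elim (α := Fin 1) i 0)
    simp [recOutmap, stepOutmap, hupper]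
  | succ n => rfl

/-- For every n ≥ 1, the recursively defined outmap s_n is the outmap of a USO
of the n-dimensional hypercube. -/
theorem recOutmap_isUSO (n : ℕ) (hn : 1 ≤ n) :
    IsUSO n (recOutmap n) := by
  induction n, hn using Nat.le_induction with
  | base =>
    rw [recOutmap_succ]
    exact (isUSO_zero _).stepOutmap
  | succ n _ ih =>
    rw [recOutmap_succ]
    exact ih.stepOutmap
end
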